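/- arXiv:1903.01153 — 3 statements merged into one kernel-verified Lean document; each statement's English description precedes it below -/
import Mathlib

section
/- Lemma 1 (soundness of the compilation). Let Λ = (Ψ, Σ) be a learning task and P_Λ its compiled conditional-effects planning task over schema headers Ξ. If π is a plan solving P_Λ, then the action model Ξ' encoded by the state reached by the programming prefix of π (the state in which the first apply action of π is executed) solves Λ: for every 1 ≤ t ≤ τ there is a plan of ground actions of Ξ' that is applicable in s₀ᵗ and whose final state is sₙᵗ. -/
/-!
A solution of the compiled task simulates, one after the other, STRIPS plans for the labels.

Since `validate_t` requires `mode_prog` to be false and only apply actions delete `mode_prog`,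
every action before the first apply action is a programming action. Such actions leave the world
fluents and the test fluents alone, so the first apply action is executed in a state `s₁` whose
world part is `s₀¹` and in which no test holds. After it `mode_prog` is false forever, hence no
programming action is applicable, and the model fluents keep encoding the model `M` of `s₁`.

From then on the invariant `Inv lab M` is maintained: for some `k`, exactly the tests before `k`
hold, every label before `k` has a plan under `M`, and the world fluents are reached from the
initial state of label `k` by some plan of `M`. An apply action extends this last plan by one
ground action (`succ_applyAct_world`), and `validate_t` is applicable only for `t = k`, where it
closes the plan of label `k` and starts an empty plan for the next one. At the end all tests
hold, so all labels lie before `k`.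
-/

namespace PlanLearn

/-! ## STRIPS planning -/

/-- A STRIPS action over a set of fluents `F`: preconditions, positive effects, negative effects. -/
structure StripsAction (F : Type*) where
  pre : Set F
  add : Set F
  del : Set F

/-- A STRIPS action is applicable in a state iff its preconditions hold. -/
def StripsAction.Applicable {F : Type*} (a : StripsAction F) (s : Set F) : Prop :=
  a.pre ⊆ s

/-- Successor state of a STRIPS action: `θ(s,a) = (s \ del(a)) ∪ add(a)`. -/
def StripsAction.succ {F : Type*} (a : StripsAction F) (s : Set F) : Set F :=
  (s \ a.del) ∪ a.add

/-- A sequence of STRIPS actions is applicable in a state if each action is applicable in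
the state reached by its predecessors. -/
def StripsApplicable {F : Type*} : Set F → List (StripsAction F) → Prop
  | _, [] => True
  | s, a :: rest => a.Applicable s ∧ StripsApplicable (a.succ s) rest

/-- Final state of executing a sequence of STRIPS actions. -/
def StripsExec {F : Type*} : Set F → List (StripsAction F) → Set F
  | s, [] => s
  | s, a :: rest => StripsExec (a.succ s) rest

/-! ## Classical planning with conditional effects -/

/-- A set of literals over `F`, given by the fluents required true and the fluents required false. -/
structure LitSet (F : Type*) where
  pos : Set F
  neg : Set F

/-- A set of literals holds in a state. -/
def LitSet.Holds {F : Type*} (L : LitSet F) (s : Set F) : Prop :=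
  L.pos ⊆ s ∧ ∀ f ∈ L.neg, f ∉ s

/-- An action with conditional effects: a precondition (a condition on states) and a set of
conditional effects `C ▷ E`. -/
structure CondAction (F : Type*) where
  pre : Set F → Prop
  effs : Set (LitSet F × LitSet F)

/-- Applicability of a conditional-effects action. -/
def CondAction.Applicable {F : Type*} (b : CondAction F) (s : Set F) : Prop := b.pre s

/-- Successor state of a conditional-effects action: for every conditional effect whose
condition holds, remove the fluents its effect makes false and add the fluents its effect
makes true (additions prevail over deletions). -/
def CondAction.succ {F : Type*} (b : CondAction F) (s : Set F) : Set F :=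
  (s \ {f | ∃ ce ∈ b.effs, LitSet.Holds ce.1 s ∧ f ∈ ce.2.neg}) ∪
    {f | ∃ ce ∈ b.effs, LitSet.Holds ce.1 s ∧ f ∈ ce.2.pos}

/-- Applicability of a sequence of conditional-effects actions. -/
def CondApplicable {F : Type*} : Set F → List (CondAction F) → Prop
  | _, [] => True
  | s, b :: rest => b.Applicable s ∧ CondApplicable (b.succ s) rest

/-- Final state of executing a sequence of conditional-effects actions. -/
def CondExec {F : Type*} : Set F → List (CondAction F) → Set F
  | s, [] => s
  | s, b :: rest => CondExec (b.succ s) rest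

/-- A conditional-effects planning task: a set of actions, an initial state and a goal. -/
structure CondTask (F : Type*) where
  acts : Set (CondAction F)
  init : Set F
  goal : Set F

/-- A plan solves a conditional-effects planning task iff all its actions belong to the task,
it is applicable in the initial state, and the goal holds in its final state. -/
def CondTask.Solves {F : Type*} (T : CondTask F) (π : List (CondAction F)) : Prop :=
  (∀ b ∈ π, b ∈ T.acts) ∧ CondApplicable T.init π ∧ T.goal ⊆ CondExec T.init π

/-! ## Predicates, objects, ground and lifted fluents, action models -/

/-- Ground fluents: predicates `P` (with arities `arP`) instantiated on objects `O`. -/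
def GFluent (P O : Type*) (arP : P → ℕ) := Σ p : P, Fin (arP p) → O

/-- Lifted fluents: predicates `P` instantiated on the variable names `v₁, …, v_k`. -/
def VFluent (P : Type*) (arP : P → ℕ) (k : ℕ) := Σ p : P, Fin (arP p) → Fin k

/-- Ground instance `f[ω]` of a lifted fluent `f` under the binding `ω` of variable names
to objects. -/
def groundVF {P O : Type*} {arP : P → ℕ} {k : ℕ} (ω : Fin k → O) (f : VFluent P arP k) :
    GFluent P O arP := ⟨f.1, fun i => ω (f.2 i)⟩

/-- A STRIPS operator schema of arity `k`: preconditions, positive and negative effects, all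
lifted fluents mentioning only the variable names `v₁, …, v_k`. -/
structure Schema (P : Type*) (arP : P → ℕ) (k : ℕ) where
  pre : Set (VFluent P arP k)
  add : Set (VFluent P arP k)
  del : Set (VFluent P arP k)

/-- The ground STRIPS action `ξ'(ω)` obtained from a schema by substituting each variable
name `vᵢ` by the object `ωᵢ`. -/
def Schema.ground {P O : Type*} {arP : P → ℕ} {k : ℕ} (σ : Schema P arP k)
    (ω : Fin k → O) : StripsAction (GFluent P O arP) where
  pre := groundVF ω '' σ.pre
  add := groundVF ω '' σ.add
  del := groundVF ω '' σ.del

/-- An action model over schema headers `X` (with arities `arX`): one schema per header. -/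
def Model (P : Type*) (arP : P → ℕ) (X : Type*) (arX : X → ℕ) :=
  ∀ ξ : X, Schema P arP (arX ξ)

/-- A ground plan step `ξ(ω)`: a schema header together with a binding of its parameters. -/
def GroundStep (O X : Type*) (arX : X → ℕ) := Σ ξ : X, Fin (arX ξ) → O

/-- The sequence of ground STRIPS actions obtained from plan steps under an action model. -/
def groundPlan {P O X : Type*} {arP : P → ℕ} {arX : X → ℕ} (M : Model P arP X arX)
    (steps : List (GroundStep O X arX)) : List (StripsAction (GFluent P O arP)) :=
  steps.map fun st => (M st.1).ground st.2

/-- The ground-action sequence of the steps under model `M` is applicable in `s0` and its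
final state is `sn`. -/
def FollowsExample {P O X : Type*} {arP : P → ℕ} {arX : X → ℕ} (M : Model P arP X arX)
    (s0 sn : Set (GFluent P O arP)) (steps : List (GroundStep O X arX)) : Prop :=
  StripsApplicable s0 (groundPlan M steps) ∧ StripsExec s0 (groundPlan M steps) = sn

/-- The action model `M` solves the learning task `Λ = (Ψ, Σ)` with labels
`lab = ⟨(s₀ᵗ, sₙᵗ)⟩_t`: for every label there is a plan of ground actions of `M` applicable in
`s₀ᵗ` whose final state is `sₙᵗ`. -/
def SolvesLearning {P O X : Type*} {arP : P → ℕ} {arX : X → ℕ} {τ : ℕ}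
    (M : Model P arP X arX)
    (lab : Fin τ → Set (GFluent P O arP) × Set (GFluent P O arP)) : Prop :=
  ∀ t : Fin τ, ∃ steps : List (GroundStep O X arX),
    FollowsExample M (lab t).1 (lab t).2 steps

/-! ## The compiled task `P_Λ` -/

/-- Fluents of the compiled task `P_Λ`: world fluents `F`, model fluents `pre_f(ξ)`,
`del_f(ξ)`, `add_f(ξ)`, the `mode_prog` fluent and the `test_t` fluents. -/
inductive CFluent (P O X : Type*) (arP : P → ℕ) (arX : X → ℕ) (τ : ℕ) where
  | world : GFluent P O arP → CFluent P O X arP arX τ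
  | preF : (ξ : X) → VFluent P arP (arX ξ) → CFluent P O X arP arX τ
  | delF : (ξ : X) → VFluent P arP (arX ξ) → CFluent P O X arP arX τ
  | addF : (ξ : X) → VFluent P arP (arX ξ) → CFluent P O X arP arX τ
  | modeProg : CFluent P O X arP arX τ
  | test : Fin τ → CFluent P O X arP arX τ

variable {P O X : Type*} {arP : P → ℕ} {arX : X → ℕ} {τ : ℕ}

/-- `programPre_{f,ξ}`: requires `mode_prog` and `pre_f(ξ)` true and `del_f(ξ)`, `add_f(ξ)`
false; deletes `pre_f(ξ)`. -/
def programPre (ξ : X) (f : VFluent P arP (arX ξ)) :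
    CondAction (CFluent P O X arP arX τ) where
  pre s := CFluent.modeProg ∈ s ∧ CFluent.preF ξ f ∈ s ∧
    CFluent.delF ξ f ∉ s ∧ CFluent.addF ξ f ∉ s
  effs := {(⟨∅, ∅⟩, ⟨∅, {CFluent.preF ξ f}⟩)}

/-- `programEff_{f,ξ}`: requires `mode_prog` true and `del_f(ξ)`, `add_f(ξ)` false; adds
`del_f(ξ)` if `pre_f(ξ)` holds, and adds `add_f(ξ)` if `pre_f(ξ)` does not hold. -/
def programEff (ξ : X) (f : VFluent P arP (arX ξ)) :
    CondAction (CFluent P O X arP arX τ) where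
  pre s := CFluent.modeProg ∈ s ∧ CFluent.delF ξ f ∉ s ∧ CFluent.addF ξ f ∉ s
  effs := {(⟨{CFluent.preF ξ f}, ∅⟩, ⟨{CFluent.delF ξ f}, ∅⟩),
           (⟨∅, {CFluent.preF ξ f}⟩, ⟨{CFluent.addF ξ f}, ∅⟩)}

/-- `apply_{ξ,ω}`: applicable in `s` iff for every lifted fluent `f`, `pre_f(ξ) ∈ s` implies
`f[ω] ∈ s`; deletes `f[ω]` whenever `del_f(ξ) ∈ s`, adds `f[ω]` whenever `add_f(ξ) ∈ s`, and
deletes `mode_prog`. -/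
def applyAct (ξ : X) (ω : Fin (arX ξ) → O) :
    CondAction (CFluent P O X arP arX τ) where
  pre s := ∀ f : VFluent P arP (arX ξ),
    CFluent.preF ξ f ∈ s → CFluent.world (groundVF ω f) ∈ s
  effs := {ce | (∃ f : VFluent P arP (arX ξ),
                  ce = (⟨{CFluent.delF ξ f}, ∅⟩, ⟨∅, {CFluent.world (groundVF ω f)}⟩)) ∨
                (∃ f : VFluent P arP (arX ξ),
                  ce = (⟨{CFluent.addF ξ f}, ∅⟩, ⟨{CFluent.world (groundVF ω f)}, ∅⟩)) ∨
                ce = (⟨∅, ∅⟩, ⟨∅, {CFluent.modeProg}⟩)}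

/-- The initial state of the example following example `t` (for the last example, its own
final state, i.e. no change of world fluents). -/
def nextInit (lab : Fin τ → Set (GFluent P O arP) × Set (GFluent P O arP)) (t : Fin τ) :
    Set (GFluent P O arP) :=
  if h : t.1 + 1 < τ then (lab ⟨t.1 + 1, h⟩).1 else (lab t).2

/-- `validate_t`: applicable iff the world fluents equal `sₙᵗ`, `mode_prog` is false, `test_j`
holds exactly for `j < t`; adds `test_t` and replaces the world fluents `sₙᵗ` by `s₀^{t+1}`. -/
def validate (lab : Fin τ → Set (GFluent P O arP) × Set (GFluent P O arP)) (t : Fin τ) :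
    CondAction (CFluent P O X arP arX τ) where
  pre s := (∀ g, CFluent.world g ∈ s ↔ g ∈ (lab t).2) ∧ CFluent.modeProg ∉ s ∧
    (∀ j : Fin τ, CFluent.test j ∈ s ↔ j < t)
  effs := {(⟨∅, ∅⟩,
    ⟨insert (CFluent.test t) (CFluent.world '' (nextInit lab t \ (lab t).2)),
     CFluent.world '' ((lab t).2 \ nextInit lab t)⟩)}

/-- The actions `A_Λ` of the compiled task. -/
def compiledActs (lab : Fin τ → Set (GFluent P O arP) × Set (GFluent P O arP)) :
    Set (CondAction (CFluent P O X arP arX τ)) :=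
  {a | (∃ ξ f, a = programPre ξ f) ∨ (∃ ξ f, a = programEff ξ f) ∨
       (∃ ξ ω, a = applyAct ξ ω) ∨ (∃ t, a = validate lab t)}

/-- The initial state `I_Λ` of the compiled task: the world fluents of `s₀¹`, all the fluents
`pre_f(ξ)`, and `mode_prog`. -/
def compiledInit [NeZero τ]
    (lab : Fin τ → Set (GFluent P O arP) × Set (GFluent P O arP)) :
    Set (CFluent P O X arP arX τ) :=
  {c | (∃ g ∈ (lab 0).1, c = CFluent.world g) ∨ (∃ ξ f, c = CFluent.preF ξ f) ∨
       c = CFluent.modeProg}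

/-- The goal `G_Λ` of the compiled task: all the `test_t` fluents. -/
def compiledGoal : Set (CFluent P O X arP arX τ) := {c | ∃ t, c = CFluent.test t}

/-- The compiled classical planning task with conditional effects `P_Λ`. -/
def compiledTask [NeZero τ]
    (lab : Fin τ → Set (GFluent P O arP) × Set (GFluent P O arP)) :
    CondTask (CFluent P O X arP arX τ) :=
  ⟨compiledActs lab, compiledInit lab, compiledGoal⟩

/-- A state of the compiled task encodes the action model `M`. -/
def Encodes (s : Set (CFluent P O X arP arX τ)) (M : Model P arP X arX) : Prop :=
  ∀ (ξ : X) (f : VFluent P arP (arX ξ)),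
    (CFluent.preF ξ f ∈ s ↔ f ∈ (M ξ).pre) ∧
    (CFluent.delF ξ f ∈ s ↔ f ∈ (M ξ).del) ∧
    (CFluent.addF ξ f ∈ s ↔ f ∈ (M ξ).add)

/-- The action model encoded by a state of the compiled task. -/
def extractModel (s : Set (CFluent P O X arP arX τ)) : Model P arP X arX :=
  fun ξ => { pre := {f | CFluent.preF ξ f ∈ s}
             add := {f | CFluent.addF ξ f ∈ s}
             del := {f | CFluent.delF ξ f ∈ s} }

/-- A state of the compiled task encodes the world state `w` (`s ∩ F = w`). -/
def EncodesWorld (s : Set (CFluent P O X arP arX τ)) (w : Set (GFluent P O arP)) : Prop :=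
  ∀ g, CFluent.world g ∈ s ↔ g ∈ w

/-- `a` is one of the `apply_{ξ,ω}` actions. -/
def IsApplyAction (a : CondAction (CFluent P O X arP arX τ)) : Prop :=
  ∃ (ξ : X) (ω : Fin (arX ξ) → O), a = applyAct ξ ω

/-- `a` is one of the programming actions `programPre_{f,ξ}` or `programEff_{f,ξ}`. -/
def IsProgramAction (a : CondAction (CFluent P O X arP arX τ)) : Prop :=
  (∃ (ξ : X) (f : VFluent P arP (arX ξ)), a = programPre ξ f) ∨
  (∃ (ξ : X) (f : VFluent P arP (arX ξ)), a = programEff ξ f)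

/-- `c` is one of the model fluents `pre_f(ξ)`, `del_f(ξ)`, `add_f(ξ)`. -/
def IsModelFluent (c : CFluent P O X arP arX τ) : Prop :=
  (∃ ξ f, c = CFluent.preF ξ f) ∨ (∃ ξ f, c = CFluent.delF ξ f) ∨
  (∃ ξ f, c = CFluent.addF ξ f)

/-! ### Appending an action to a STRIPS plan -/

lemma stripsApplicable_append_singleton {F : Type*} (l : List (StripsAction F))
    (a : StripsAction F) (s : Set F) :
    StripsApplicable s (l ++ [a]) ↔ StripsApplicable s l ∧ a.Applicable (StripsExec s l) := by
  induction l generalizing s with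
  | nil => simp [StripsApplicable, StripsExec]
  | cons b l ih => simp [StripsApplicable, StripsExec, ih, and_assoc]

lemma stripsExec_append_singleton {F : Type*} (l : List (StripsAction F))
    (a : StripsAction F) (s : Set F) :
    StripsExec s (l ++ [a]) = a.succ (StripsExec s l) := by
  induction l generalizing s with
  | nil => rfl
  | cons b l ih => simp [StripsExec, ih]

lemma FollowsExample.snoc {M : Model P arP X arX} {s0 w : Set (GFluent P O arP)}
    {steps : List (GroundStep O X arX)} (h : FollowsExample M s0 w steps)
    (st : GroundStep O X arX) (happ : ((M st.1).ground st.2).Applicable w) :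
    FollowsExample M s0 (((M st.1).ground st.2).succ w) (steps ++ [st]) := by
  obtain ⟨h1, rfl⟩ := h
  have e : groundPlan M (steps ++ [st]) = groundPlan M steps ++ [(M st.1).ground st.2] := by
    simp [groundPlan]
  rw [FollowsExample, e]
  exact ⟨(stripsApplicable_append_singleton _ _ _).2 ⟨h1, happ⟩,
    stripsExec_append_singleton _ _ _⟩

/-! ### Sequences of conditional-effects actions -/

lemma condApplicable_append {F : Type*} (l₁ l₂ : List (CondAction F)) (s : Set F) :
    CondApplicable s (l₁ ++ l₂) ↔ CondApplicable s l₁ ∧ CondApplicable (CondExec s l₁) l₂ := by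
  induction l₁ generalizing s with
  | nil => simp [CondApplicable, CondExec]
  | cons b l ih => simp [CondApplicable, CondExec, ih, and_assoc]

lemma condExec_append {F : Type*} (l₁ l₂ : List (CondAction F)) (s : Set F) :
    CondExec s (l₁ ++ l₂) = CondExec (CondExec s l₁) l₂ := by
  induction l₁ generalizing s with
  | nil => rfl
  | cons b l ih => simp [CondExec, ih]

/-! ### Effects of the compiled actions -/

/-- The world part `s ∩ F` of a state of the compiled task. -/
def worldOf (s : Set (CFluent P O X arP arX τ)) : Set (GFluent P O arP) :=
  {g | CFluent.world g ∈ s}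

/-- Programming actions change model fluents only. -/
lemma mem_succ_of_isProgramAction {a : CondAction (CFluent P O X arP arX τ)}
    (ha : IsProgramAction a) (s : Set (CFluent P O X arP arX τ))
    {c : CFluent P O X arP arX τ} (hc : ¬ IsModelFluent c) : c ∈ a.succ s ↔ c ∈ s := by
  have h1 : ∀ ξ f, c ≠ CFluent.preF ξ f := fun ξ f h => hc (Or.inl ⟨ξ, f, h⟩)
  have h2 : ∀ ξ f, c ≠ CFluent.delF ξ f := fun ξ f h => hc (Or.inr (Or.inl ⟨ξ, f, h⟩))
  have h3 : ∀ ξ f, c ≠ CFluent.addF ξ f := fun ξ f h => hc (Or.inr (Or.inr ⟨ξ, f, h⟩))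
  rcases ha with ⟨ξ, f, rfl⟩ | ⟨ξ, f, rfl⟩
  · simp [CondAction.succ, programPre, h1]
  · simp [CondAction.succ, programEff, h2, h3]

lemma mem_succ_applyAct (ξ : X) (ω : Fin (arX ξ) → O) (s : Set (CFluent P O X arP arX τ))
    (c : CFluent P O X arP arX τ) :
    c ∈ (applyAct ξ ω).succ s ↔
      (c ∈ s ∧ ¬ ((∃ f, CFluent.delF ξ f ∈ s ∧ c = CFluent.world (groundVF ω f)) ∨
          c = CFluent.modeProg)) ∨
        ∃ f, CFluent.addF ξ f ∈ s ∧ c = CFluent.world (groundVF ω f) := by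
  simp only [CondAction.succ, applyAct, Set.mem_union, Set.mem_sdiff, Set.mem_ofPred_eq]
  refine or_congr (and_congr_right fun _ => not_congr ?_) ?_
  · constructor
    · rintro ⟨_, ⟨f, rfl⟩ | ⟨f, rfl⟩ | rfl, hh, hm⟩
      · exact Or.inl ⟨f, hh.1 rfl, hm⟩
      · exact hm.elim
      · exact Or.inr hm
    · rintro (⟨f, hf, rfl⟩ | rfl)
      · exact ⟨_, Or.inl ⟨f, rfl⟩, by simpa [LitSet.Holds] using hf, rfl⟩
      · exact ⟨_, Or.inr (Or.inr rfl), by simp [LitSet.Holds], rfl⟩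
  · constructor
    · rintro ⟨_, ⟨f, rfl⟩ | ⟨f, rfl⟩ | rfl, hh, hm⟩
      · exact hm.elim
      · exact ⟨f, hh.1 rfl, hm⟩
      · exact hm.elim
    · rintro ⟨f, hf, rfl⟩
      exact ⟨_, Or.inr (Or.inl ⟨f, rfl⟩), by simpa [LitSet.Holds] using hf, rfl⟩

lemma mem_succ_validate (lab : Fin τ → Set (GFluent P O arP) × Set (GFluent P O arP))
    (t : Fin τ) (s : Set (CFluent P O X arP arX τ)) (c : CFluent P O X arP arX τ) :
    c ∈ (validate lab t).succ s ↔
      (c ∈ s ∧ c ∉ CFluent.world '' ((lab t).2 \ nextInit lab t)) ∨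
        c = CFluent.test t ∨ c ∈ CFluent.world '' (nextInit lab t \ (lab t).2) := by
  simp [CondAction.succ, validate, LitSet.Holds]

/-- In a state encoding `M`, `apply_{ξ,ω}` acts on the world part as the ground action `ξ'(ω)`. -/
lemma succ_applyAct_world {M : Model P arP X arX} {s : Set (CFluent P O X arP arX τ)}
    (hM : Encodes s M) (ξ : X) (ω : Fin (arX ξ) → O) :
    worldOf ((applyAct ξ ω).succ s) = ((M ξ).ground ω).succ (worldOf s) := by
  have hd : ∀ f, CFluent.delF ξ f ∈ s ↔ f ∈ (M ξ).del := fun f => (hM ξ f).2.1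
  have ha : ∀ f, CFluent.addF ξ f ∈ s ↔ f ∈ (M ξ).add := fun f => (hM ξ f).2.2
  ext g
  simp [worldOf, mem_succ_applyAct, StripsAction.succ, Schema.ground, hd, ha, eq_comm]

lemma applyAct_applicable_world {M : Model P arP X arX} {s : Set (CFluent P O X arP arX τ)}
    (hM : Encodes s M) (ξ : X) (ω : Fin (arX ξ) → O) (h : (applyAct ξ ω).Applicable s) :
    ((M ξ).ground ω).Applicable (worldOf s) := by
  rintro _ ⟨f, hf, rfl⟩
  exact h f ((hM ξ f).1.2 hf)

lemma succ_validate_world {lab : Fin τ → Set (GFluent P O arP) × Set (GFluent P O arP)}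
    {t : Fin τ} {s : Set (CFluent P O X arP arX τ)} (hw : worldOf s = (lab t).2) :
    worldOf ((validate lab t).succ s) = nextInit lab t := by
  ext g
  have hg : CFluent.world g ∈ s ↔ g ∈ (lab t).2 := by rw [← hw]; rfl
  simp only [worldOf, mem_succ_validate, Set.mem_ofPred_eq, hg]
  simp
  tauto

/-! ### The simulation invariant -/

/-- The state `s` encodes `M`, and for some `k` exactly the labels before `k` are validated and
solved by `M`, while `M` leads from the initial state of label `k` to the world part of `s`.
The last clause is vacuous for `k ≥ τ`, that is, once every label is validated. -/
def Inv (lab : Fin τ → Set (GFluent P O arP) × Set (GFluent P O arP)) (M : Model P arP X arX)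
    (s : Set (CFluent P O X arP arX τ)) : Prop :=
  Encodes s M ∧ ∃ k : ℕ,
    (∀ j : Fin τ, CFluent.test j ∈ s ↔ j.1 < k) ∧
    (∀ t : Fin τ, t.1 < k → ∃ steps : List (GroundStep O X arX),
      FollowsExample M (lab t).1 (lab t).2 steps) ∧
    (∀ t : Fin τ, t.1 = k → ∃ steps : List (GroundStep O X arX),
      FollowsExample M (lab t).1 (worldOf s) steps)

lemma Inv.applyAct {lab : Fin τ → Set (GFluent P O arP) × Set (GFluent P O arP)}
    {M : Model P arP X arX} {s : Set (CFluent P O X arP arX τ)} (h : Inv lab M s)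
    (ξ : X) (ω : Fin (arX ξ) → O) (happ : (applyAct ξ ω).Applicable s) :
    Inv lab M ((applyAct ξ ω).succ s) := by
  obtain ⟨hM, k, htest, hdone, hcur⟩ := h
  refine ⟨fun ξ' f => ?_, k, fun j => ?_, hdone, fun t ht => ?_⟩
  · simpa [mem_succ_applyAct] using hM ξ' f
  · simpa [mem_succ_applyAct] using htest j
  · obtain ⟨steps, hs⟩ := hcur t ht
    rw [succ_applyAct_world hM]
    exact ⟨_, hs.snoc ⟨ξ, ω⟩ (applyAct_applicable_world hM ξ ω happ)⟩

lemma Inv.validate {lab : Fin τ → Set (GFluent P O arP) × Set (GFluent P O arP)}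
    {M : Model P arP X arX} {s : Set (CFluent P O X arP arX τ)} (h : Inv lab M s)
    (t : Fin τ) (happ : (validate lab t).Applicable s) :
    Inv lab M ((validate lab t).succ s) := by
  obtain ⟨hM, k, htest, hdone, hcur⟩ := h
  obtain ⟨hw, -, ht⟩ := happ
  have hw : worldOf s = (lab t).2 := Set.ext hw
  -- The tests true in `s` are those before `k` and also those before `t`.
  have hk : t.1 = k := by
    refine le_antisymm ?_ ?_
    · by_contra! hlt
      exact lt_irrefl k ((htest ⟨k, hlt.trans t.2⟩).1 ((ht _).2 hlt))
    · by_contra! hlt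
      exact lt_irrefl t ((ht t).1 ((htest t).2 hlt))
  refine ⟨fun ξ' f => ?_, k + 1, fun j => ?_, fun j hj => ?_, fun j hj => ?_⟩
  · simpa [mem_succ_validate] using hM ξ' f
  · have : CFluent.test j ∈ (PlanLearn.validate lab t).succ s ↔ j.1 < k ∨ j = t := by
      simp [mem_succ_validate, htest]
    rw [this, Fin.ext_iff]
    omega
  · rcases Nat.lt_succ_iff_lt_or_eq.1 hj with hj | hj
    · exact hdone j hj
    · obtain rfl : j = t := Fin.ext (hj.trans hk.symm)
      exact hw ▸ hcur j hj
  · refine ⟨[], trivial, ?_⟩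
    have hjt : t.1 + 1 = j.1 := by omega
    have hlt : t.1 + 1 < τ := hjt ▸ j.2
    have hj' : (⟨t.1 + 1, hlt⟩ : Fin τ) = j := Fin.ext hjt
    rw [succ_validate_world hw, nextInit, dif_pos hlt, hj']
    rfl

/-- Once `mode_prog` is false, the invariant persists along every applicable sequence. -/
lemma Inv.condExec {lab : Fin τ → Set (GFluent P O arP) × Set (GFluent P O arP)}
    {M : Model P arP X arX} (π : List (CondAction (CFluent P O X arP arX τ)))
    (s : Set (CFluent P O X arP arX τ)) (h : Inv lab M s) (hmode : CFluent.modeProg ∉ s)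
    (hacts : ∀ b ∈ π, b ∈ compiledActs lab) (happ : CondApplicable s π) :
    Inv lab M (CondExec s π) := by
  induction π generalizing s with
  | nil => exact h
  | cons b π ih =>
    obtain ⟨hb, happ⟩ := happ
    have hacts' : ∀ b ∈ π, b ∈ compiledActs lab := fun c hc => hacts c (List.mem_cons_of_mem _ hc)
    rcases hacts b List.mem_cons_self with
      ⟨ξ, f, rfl⟩ | ⟨ξ, f, rfl⟩ | ⟨ξ, ω, rfl⟩ | ⟨t, rfl⟩
    · exact absurd hb.1 hmode
    · exact absurd hb.1 hmode
    · exact ih _ (h.applyAct ξ ω hb) (by simp [mem_succ_applyAct]) hacts' happ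
    · exact ih _ (h.validate t hb) (by simpa [mem_succ_validate] using hmode) hacts' happ

/-- A sequence without apply actions executed while `mode_prog` holds consists of programming
actions, so it preserves all fluents other than the model fluents. -/
lemma mem_condExec_of_no_apply {lab : Fin τ → Set (GFluent P O arP) × Set (GFluent P O arP)}
    (π : List (CondAction (CFluent P O X arP arX τ)))
    (s : Set (CFluent P O X arP arX τ)) (hmode : CFluent.modeProg ∈ s)
    (hacts : ∀ b ∈ π, b ∈ compiledActs lab) (hno : ∀ b ∈ π, ¬ IsApplyAction b)
    (happ : CondApplicable s π) {c : CFluent P O X arP arX τ} (hc : ¬ IsModelFluent c) :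
    c ∈ CondExec s π ↔ c ∈ s := by
  induction π generalizing s with
  | nil => rfl
  | cons b π ih =>
    obtain ⟨hb, happ⟩ := happ
    have hprog : IsProgramAction b := by
      rcases hacts b List.mem_cons_self with h | h | h | ⟨t, rfl⟩
      · exact Or.inl h
      · exact Or.inr h
      · exact absurd h (hno b List.mem_cons_self)
      · exact absurd hmode hb.2.1
    have hmode' : CFluent.modeProg ∈ b.succ s :=
      (mem_succ_of_isProgramAction hprog s (by simp [IsModelFluent])).2 hmode
    exact (ih _ hmode' (fun c hc => hacts c (List.mem_cons_of_mem _ hc))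
      (fun c hc => hno c (List.mem_cons_of_mem _ hc)) happ).trans
      (mem_succ_of_isProgramAction hprog s hc)

/-- **Lemma 1 (soundness of the compilation).** If `π₁ ++ apply_{ξ,ω} :: π₂` is a plan
solving the compiled task `P_Λ` whose first apply action is the displayed one (no action
of `π₁` is an apply action), then the action model encoded by the state in which that
first apply action is executed solves the learning task `Λ`: for every label `t` there is
a plan of ground actions of the encoded model applicable in `s₀ᵗ` with final state `sₙᵗ`. -/
theorem soundness_of_compilation
    {P O X : Type*} {arP : P → ℕ} {arX : X → ℕ} {τ : ℕ} [NeZero τ]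
    (lab : Fin τ → Set (GFluent P O arP) × Set (GFluent P O arP))
    (π₁ π₂ : List (CondAction (CFluent P O X arP arX τ)))
    (ξ : X) (ω : Fin (arX ξ) → O)
    (hsolves : (compiledTask lab).Solves (π₁ ++ applyAct ξ ω :: π₂))
    (hfirst : ∀ a ∈ π₁, ¬ IsApplyAction a) :
    SolvesLearning (extractModel (CondExec (compiledTask lab).init π₁)) lab := by
  obtain ⟨hacts, happ, hgoal⟩ := hsolves
  have hacts₁ : ∀ b ∈ π₁, b ∈ compiledActs lab := fun b hb => hacts b (by simp [hb])
  have hacts₂ : ∀ b ∈ π₂, b ∈ compiledActs lab := fun b hb => hacts b (by simp [hb])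
  rw [condApplicable_append] at happ
  obtain ⟨happ₁, happ, happ₂⟩ := happ
  rw [condExec_append] at hgoal
  have hpre : ∀ {c}, ¬ IsModelFluent c →
      (c ∈ CondExec (compiledTask lab).init π₁ ↔ c ∈ compiledInit lab) :=
    mem_condExec_of_no_apply π₁ _ (Or.inr (Or.inr rfl)) hacts₁ hfirst happ₁
  set s₁ := CondExec (compiledTask lab).init π₁
  have hinv : Inv lab (extractModel s₁) s₁ := by
    refine ⟨fun _ _ => ⟨Iff.rfl, Iff.rfl, Iff.rfl⟩, 0, fun j => ?_, fun t ht => ?_, fun t ht => ?_⟩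
    · rw [hpre (by simp [IsModelFluent])]
      simp [compiledInit]
    · exact absurd ht (Nat.not_lt_zero _)
    · obtain rfl : t = 0 := Fin.ext ht
      refine ⟨[], trivial, ?_⟩
      ext g
      have hg : g ∈ worldOf s₁ ↔ CFluent.world g ∈ compiledInit lab :=
        hpre (by simp [IsModelFluent])
      rw [hg]
      simp [compiledInit, groundPlan, StripsExec]
  obtain ⟨-, k, htest, hdone, -⟩ :=
    Inv.condExec π₂ _ (hinv.applyAct ξ ω happ) (by simp [mem_succ_applyAct]) hacts₂ happ₂
  exact fun t => hdone t ((htest t).1 (hgoal ⟨t, rfl⟩))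
end PlanLearn
end

section
/- Well-formedness of the programmed model. In the compiled task P_Λ, every state s reachable from I_Λ by an applicable sequence of actions of A_Λ satisfies, for every schema header ξ ∈ Ξ and every f ∈ F_v: (i) not both del_f(ξ) ∈ s and add_f(ξ) ∈ s; (ii) if del_f(ξ) ∈ s then pre_f(ξ) ∈ s; (iii) if add_f(ξ) ∈ s then pre_f(ξ) ∉ s. Consequently the action model Ξ' encoded by s is well-formed: del(ξ') ⊆ pre(ξ'), del(ξ') ∩ add(ξ') = ∅ and pre(ξ') ∩ add(ξ') = ∅ for every schema ξ'. -/
/-!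
Well-formedness is an invariant of execution. The argument tracks two facts about each pair
`(ξ, f)`: `del_f(ξ)` implies `pre_f(ξ)`, and `add_f(ξ)` implies not `pre_f(ξ)`; together they
exclude `del_f(ξ)` and `add_f(ξ)` holding at once.

They hold in the initial state, which contains no `del` or `add` fluent. Only the programming
actions touch model fluents. `programPre` removes `pre_f(ξ)` only when `del_f(ξ)` is absent, so
no `del` fluent loses its `pre` fluent. `programEff` adds `del_f(ξ)` only when `pre_f(ξ)` holds
and `add_f(ξ)` only when it does not, and it leaves `pre_f(ξ)` unchanged. No action adds a `pre`
fluent.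
-/

namespace PlanLearn

variable {P O X : Type*} {arP : P → ℕ} {arX : X → ℕ} {τ : ℕ}

/-- The invariant of execution: `del_f(ξ)` implies `pre_f(ξ)`, and `add_f(ξ)` excludes it. -/
def WellFormedState (s : Set (CFluent P O X arP arX τ)) : Prop :=
  ∀ (ξ : X) (f : VFluent P arP (arX ξ)),
    (CFluent.delF ξ f ∈ s → CFluent.preF ξ f ∈ s) ∧
    (CFluent.addF ξ f ∈ s → CFluent.preF ξ f ∉ s)

theorem wellFormedState_init [NeZero τ]
    (lab : Fin τ → Set (GFluent P O arP) × Set (GFluent P O arP)) :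
    WellFormedState (compiledInit lab : Set (CFluent P O X arP arX τ)) := by
  intro ξ f
  simp [compiledInit]

/-- The invariant only concerns model fluents, so it transfers between states that agree on
them. -/
theorem WellFormedState.congr {s s' : Set (CFluent P O X arP arX τ)} (h : WellFormedState s)
    (hpre : ∀ ξ f, CFluent.preF ξ f ∈ s' ↔ CFluent.preF ξ f ∈ s)
    (hdel : ∀ ξ f, CFluent.delF ξ f ∈ s' ↔ CFluent.delF ξ f ∈ s)
    (hadd : ∀ ξ f, CFluent.addF ξ f ∈ s' ↔ CFluent.addF ξ f ∈ s) :
    WellFormedState s' := by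
  intro ξ f
  rw [hpre, hdel, hadd]
  exact h ξ f

theorem wellFormedState_programPre {s : Set (CFluent P O X arP arX τ)} (ξ : X)
    (f : VFluent P arP (arX ξ)) (happ : (programPre ξ f).Applicable s)
    (h : WellFormedState s) : WellFormedState ((programPre ξ f).succ s) := by
  obtain ⟨-, -, hdel, -⟩ := happ
  have hsucc : (programPre ξ f).succ s = s \ {CFluent.preF ξ f} := by
    ext c
    simp [CondAction.succ, programPre, LitSet.Holds]
  rw [hsucc]
  refine fun ξ' f' => ⟨fun hd => ⟨(h ξ' f').1 hd.1, fun heq => ?_⟩,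
    fun ha hp => (h ξ' f').2 ha.1 hp.1⟩
  -- The deleted `pre` fluent belongs to a pair whose `del` fluent is absent.
  obtain ⟨rfl, hf⟩ := CFluent.preF.inj heq
  obtain rfl := eq_of_heq hf
  exact hdel hd.1

theorem wellFormedState_programEff {s : Set (CFluent P O X arP arX τ)} (ξ : X)
    (f : VFluent P arP (arX ξ)) (h : WellFormedState s) :
    WellFormedState ((programEff ξ f).succ s) := by
  have hpre : ∀ ξ' f', CFluent.preF ξ' f' ∈ (programEff ξ f).succ s ↔ CFluent.preF ξ' f' ∈ s := by
    intro ξ' f'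
    simp [CondAction.succ, programEff, LitSet.Holds]
  intro ξ' f'
  rw [hpre]
  constructor
  · rintro (⟨hd, -⟩ | ⟨ce, rfl | rfl, hc, he⟩)
    · exact (h ξ' f').1 hd
    · obtain ⟨rfl, hf⟩ := CFluent.delF.inj he
      obtain rfl := eq_of_heq hf
      exact hc.1 rfl
    · cases he
  · rintro (⟨ha, -⟩ | ⟨ce, rfl | rfl, hc, he⟩)
    · exact (h ξ' f').2 ha
    · cases he
    · obtain ⟨rfl, hf⟩ := CFluent.addF.inj he
      obtain rfl := eq_of_heq hf
      exact hc.2 _ rfl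

theorem wellFormedState_applyAct {s : Set (CFluent P O X arP arX τ)} (ξ : X)
    (ω : Fin (arX ξ) → O) (h : WellFormedState s) :
    WellFormedState ((applyAct ξ ω).succ s) := by
  have key : ∀ c : CFluent P O X arP arX τ, (∀ g, c ≠ CFluent.world g) → c ≠ CFluent.modeProg →
      (c ∈ (applyAct ξ ω).succ s ↔ c ∈ s) := by
    intro c hw hm
    constructor
    · rintro (⟨hc, -⟩ | ⟨ce, ⟨f, rfl⟩ | ⟨f, rfl⟩ | rfl, -, he⟩)
      · exact hc
      · exact he.elim
      · exact (hw _ he).elim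
      · exact he.elim
    · refine fun hc => Or.inl ⟨hc, ?_⟩
      rintro ⟨ce, ⟨f, rfl⟩ | ⟨f, rfl⟩ | rfl, -, he⟩
      · exact hw _ he
      · exact he
      · exact hm he
  exact h.congr (fun _ _ => key _ nofun nofun) (fun _ _ => key _ nofun nofun)
    (fun _ _ => key _ nofun nofun)

theorem wellFormedState_validate {s : Set (CFluent P O X arP arX τ)}
    (lab : Fin τ → Set (GFluent P O arP) × Set (GFluent P O arP)) (t : Fin τ)
    (h : WellFormedState s) : WellFormedState ((validate lab t).succ s) := by
  apply h.congr <;> intro ξ f <;> simp [CondAction.succ, validate, LitSet.Holds]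

theorem wellFormedState_exec
    (lab : Fin τ → Set (GFluent P O arP) × Set (GFluent P O arP))
    (π : List (CondAction (CFluent P O X arP arX τ))) (s : Set (CFluent P O X arP arX τ))
    (hacts : ∀ a ∈ π, a ∈ compiledActs lab) (happ : CondApplicable s π)
    (h : WellFormedState s) : WellFormedState (CondExec s π) := by
  induction π generalizing s with
  | nil => exact h
  | cons b rest ih =>
    refine ih (b.succ s) (fun a ha => hacts a (List.mem_cons_of_mem _ ha)) happ.2 ?_
    have happ_b := happ.1
    rcases hacts b List.mem_cons_self with ⟨ξ, f, rfl⟩ | ⟨ξ, f, rfl⟩ | ⟨ξ, ω, rfl⟩ | ⟨t, rfl⟩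
    · exact wellFormedState_programPre ξ f happ_b h
    · exact wellFormedState_programEff ξ f h
    · exact wellFormedState_applyAct ξ ω h
    · exact wellFormedState_validate lab t h

/-- **Well-formedness of the programmed model.** Every state reachable from `I_Λ` by an
applicable sequence of actions of `A_Λ` satisfies, for every header `ξ` and lifted fluent
`f`: not both `del_f(ξ)` and `add_f(ξ)`; `del_f(ξ)` implies `pre_f(ξ)`; and `add_f(ξ)`
implies not `pre_f(ξ)`. Consequently the action model encoded by such a state is
well-formed. -/
theorem wellformedness_of_programmed_model
    {P O X : Type*} {arP : P → ℕ} {arX : X → ℕ} {τ : ℕ} [NeZero τ]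
    (lab : Fin τ → Set (GFluent P O arP) × Set (GFluent P O arP))
    (π : List (CondAction (CFluent P O X arP arX τ)))
    (hacts : ∀ a ∈ π, a ∈ compiledActs lab)
    (happ : CondApplicable (compiledInit lab) π)
    (s : Set (CFluent P O X arP arX τ))
    (hs : s = CondExec (compiledInit lab) π) :
    (∀ (ξ : X) (f : VFluent P arP (arX ξ)),
      ¬(CFluent.delF ξ f ∈ s ∧ CFluent.addF ξ f ∈ s) ∧
      (CFluent.delF ξ f ∈ s → CFluent.preF ξ f ∈ s) ∧
      (CFluent.addF ξ f ∈ s → CFluent.preF ξ f ∉ s)) ∧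
    (∀ ξ : X, (extractModel s ξ).del ⊆ (extractModel s ξ).pre ∧
      (extractModel s ξ).del ∩ (extractModel s ξ).add = ∅ ∧
      (extractModel s ξ).pre ∩ (extractModel s ξ).add = ∅) := by
  have h : WellFormedState s := by
    rw [hs]
    exact wellFormedState_exec lab π _ hacts happ (wellFormedState_init lab)
  refine ⟨fun ξ f => ⟨fun hda => (h ξ f).2 hda.2 ((h ξ f).1 hda.1), h ξ f⟩, fun ξ => ⟨?_, ?_, ?_⟩⟩
  · exact fun f hd => (h ξ f).1 hd
  · exact Set.eq_empty_of_forall_notMem fun f hda => (h ξ f).2 hda.2 ((h ξ f).1 hda.1)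
  · exact Set.eq_empty_of_forall_notMem fun f hpa => (h ξ f).2 hpa.2 hpa.1

end PlanLearn
end

section
/- Ordering of validation. Let π be a plan solving the compiled task P_Λ with induced state trajectory s₀, …, sₙ. Then: (i) no action of A_Λ ever makes a fluent test_t false, so for each t the set of states containing test_t is upward closed along the trajectory; (ii) for each 1 ≤ t ≤ τ, π contains exactly one occurrence of the action validate_t; (iii) for all t < t', the occurrence of validate_t precedes the occurrence of validate_{t'} in π; and (iv) in the state in which validate_t is executed, the world-state fluents equal sₙᵗ (that state intersected with F equals sₙᵗ). -/
/-!
The argument follows the fluents `test_t` along the trajectory. No action deletes them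
(`test_mem_succ`), so once true they stay true (`test_mem_condExec_take_mono`), and only
`validate_t` adds `test_t` (`eq_validate_of_test_mem_succ`). As `test_t` is false initially and
required by the goal, `validate_t` occurs. The precondition of `validate_{t'}` forces `test_t` to be
true for `t < t'` and false for `t ≥ t'`. Hence `validate_t` cannot be executed strictly before
`validate_{t'}` when `t' ≤ t`; the case `t = t'` is uniqueness, and the case `t' < t` gives the
ordering, equality of positions being excluded because the two preconditions contradict each
other. The statement on world fluents is part of the precondition of `validate_t`.
-/

namespace PlanLearn

variable {P O X : Type*} {arP : P → ℕ} {arX : X → ℕ} {τ : ℕ}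

/-- In every state, every action of `A_Λ` preserves the true fluents `test_t`: the negative effects
of the four kinds of actions only mention world fluents, `pre_f(ξ)` and `mode_prog`. -/
theorem test_mem_succ (lab : Fin τ → Set (GFluent P O arP) × Set (GFluent P O arP))
    {a : CondAction (CFluent P O X arP arX τ)} (ha : a ∈ compiledActs lab)
    {s : Set (CFluent P O X arP arX τ)} {t : Fin τ} (ht : CFluent.test t ∈ s) :
    CFluent.test t ∈ a.succ s := by
  refine Or.inl ⟨ht, ?_⟩
  rintro ⟨ce, hce, -, hneg⟩
  rcases ha with ⟨ξ, f, rfl⟩ | ⟨ξ, f, rfl⟩ | ⟨ξ, ω, rfl⟩ | ⟨t', rfl⟩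
  · obtain rfl := hce
    simp at hneg
  · rcases hce with rfl | rfl <;> simp at hneg
  · rcases hce with ⟨f, rfl⟩ | ⟨f, rfl⟩ | rfl <;> simp at hneg
  · obtain rfl := hce
    simp at hneg

theorem test_mem_validate_succ (lab : Fin τ → Set (GFluent P O arP) × Set (GFluent P O arP))
    (s : Set (CFluent P O X arP arX τ)) (t : Fin τ) :
    CFluent.test t ∈ (validate lab t).succ s :=
  Or.inr ⟨_, rfl, ⟨Set.empty_subset _, fun _ h => h.elim⟩, Set.mem_insert _ _⟩

/-- Only `validate_t` can make `test_t` true. -/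
theorem eq_validate_of_test_mem_succ
    (lab : Fin τ → Set (GFluent P O arP) × Set (GFluent P O arP))
    {a : CondAction (CFluent P O X arP arX τ)} (ha : a ∈ compiledActs lab)
    {s : Set (CFluent P O X arP arX τ)} {t : Fin τ} (hs : CFluent.test t ∉ s)
    (ht : CFluent.test t ∈ a.succ s) : a = validate lab t := by
  rcases ht with ⟨h, -⟩ | ⟨ce, hce, -, hpos⟩
  · exact absurd h hs
  rcases ha with ⟨ξ, f, rfl⟩ | ⟨ξ, f, rfl⟩ | ⟨ξ, ω, rfl⟩ | ⟨t', rfl⟩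
  · obtain rfl := hce
    simp at hpos
  · rcases hce with rfl | rfl <;> simp at hpos
  · rcases hce with ⟨f, rfl⟩ | ⟨f, rfl⟩ | rfl <;> simp at hpos
  · obtain rfl := hce
    obtain rfl : t = t' := by simpa using hpos
    rfl

theorem condExec_take_succ {F : Type*} {π : List (CondAction F)} {i : ℕ} {a : CondAction F}
    (s : Set F) (h : π[i]? = some a) :
    CondExec s (π.take (i + 1)) = a.succ (CondExec s (π.take i)) := by
  induction π generalizing s i with
  | nil => simp at h
  | cons b l ih =>
    cases i with
    | zero =>
      obtain rfl : b = a := by simpa using h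
      simp [CondExec]
    | succ i => exact ih (b.succ s) (by simpa using h)

theorem applicable_of_getElem? {F : Type*} {π : List (CondAction F)} {i : ℕ} {a : CondAction F}
    {s : Set F} (hπ : CondApplicable s π) (h : π[i]? = some a) :
    a.Applicable (CondExec s (π.take i)) := by
  induction π generalizing s i with
  | nil => simp at h
  | cons b l ih =>
    cases i with
    | zero =>
      obtain rfl : b = a := by simpa using h
      exact hπ.1
    | succ i => exact ih hπ.2 (by simpa using h)

theorem test_mem_condExec_take_mono
    (lab : Fin τ → Set (GFluent P O arP) × Set (GFluent P O arP))
    {π : List (CondAction (CFluent P O X arP arX τ))} (hπ : ∀ b ∈ π, b ∈ compiledActs lab)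
    (s : Set (CFluent P O X arP arX τ)) (t : Fin τ) {i j : ℕ} (hij : i ≤ j)
    (h : CFluent.test t ∈ CondExec s (π.take i)) :
    CFluent.test t ∈ CondExec s (π.take j) := by
  induction j, hij using Nat.le_induction with
  | base => exact h
  | succ j _ ih =>
    cases hj : π[j]? with
    | none =>
      have hlen : π.length ≤ j := List.getElem?_eq_none_iff.1 hj
      rwa [List.take_of_length_le (by omega : π.length ≤ j + 1),
        ← List.take_of_length_le hlen]
    | some a =>
      rw [condExec_take_succ s hj]
      exact test_mem_succ lab (hπ a (List.mem_of_getElem? hj)) ih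

/-- A fluent `test_t` that is false initially and true after executing `π` was made true by some
step of `π`, and that step is `validate_t`. -/
theorem exists_validate_of_test_mem_condExec
    (lab : Fin τ → Set (GFluent P O arP) × Set (GFluent P O arP))
    {π : List (CondAction (CFluent P O X arP arX τ))} (hπ : ∀ b ∈ π, b ∈ compiledActs lab)
    {s : Set (CFluent P O X arP arX τ)} {t : Fin τ} (hs : CFluent.test t ∉ s)
    (h : CFluent.test t ∈ CondExec s π) : ∃ i : ℕ, π[i]? = some (validate lab t) := by
  induction π generalizing s with
  | nil => exact absurd h hs
  | cons b l ih =>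
    by_cases hb : CFluent.test t ∈ b.succ s
    · have hbv := eq_validate_of_test_mem_succ lab (hπ b (by simp)) hs hb
      exact ⟨0, by simp [hbv]⟩
    · obtain ⟨i, hi⟩ := ih (fun c hc => hπ c (List.mem_cons_of_mem _ hc)) hb h
      exact ⟨i + 1, by simpa using hi⟩

/-- **Ordering of validation.** Let `π` be a plan solving the compiled task `P_Λ`. Then:
(i) no action of `A_Λ` ever makes a fluent `test_t` false, so the states containing `test_t`
are upward closed along the induced trajectory; (ii) each `validate_t` occurs exactly once in
`π`; (iii) for `t < t'` the occurrence of `validate_t` precedes that of `validate_{t'}`; and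
(iv) in the state in which `validate_t` is executed the world fluents equal `sₙᵗ`. -/
theorem validation_ordering
    {P O X : Type*} {arP : P → ℕ} {arX : X → ℕ} {τ : ℕ} [NeZero τ]
    (lab : Fin τ → Set (GFluent P O arP) × Set (GFluent P O arP))
    (π : List (CondAction (CFluent P O X arP arX τ)))
    (hsolves : (compiledTask lab).Solves π) :
    (∀ a ∈ compiledActs lab, ∀ (s : Set (CFluent P O X arP arX τ)) (t : Fin τ),
      CFluent.test t ∈ s → CFluent.test t ∈ a.succ s) ∧
    (∀ (t : Fin τ) (i j : ℕ), i ≤ j →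
      CFluent.test t ∈ CondExec (compiledInit lab) (π.take i) →
      CFluent.test t ∈ CondExec (compiledInit lab) (π.take j)) ∧
    (∀ t : Fin τ, ∃! i : ℕ, π[i]? = some (validate lab t)) ∧
    (∀ t t' : Fin τ, t < t' → ∀ i j : ℕ,
      π[i]? = some (validate lab t) → π[j]? = some (validate lab t') → i < j) ∧
    (∀ (t : Fin τ) (i : ℕ), π[i]? = some (validate lab t) →
      ∀ g : GFluent P O arP,
        CFluent.world g ∈ CondExec (compiledInit lab) (π.take i) ↔ g ∈ (lab t).2) := by
  obtain ⟨hacts, happ, hgoal⟩ := hsolves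
  have hpre : ∀ (t : Fin τ) (i : ℕ), π[i]? = some (validate lab t) →
      (validate lab t).pre (CondExec (compiledInit lab) (π.take i)) :=
    fun t i hi => applicable_of_getElem? happ hi
  -- At step `j`, just before `validate_{t'}`, `test_t` is false for `t' ≤ t`, whereas it is true
  -- from step `i + 1` on; hence no `validate_t` precedes such a `validate_{t'}`.
  have hnot_lt : ∀ (t t' : Fin τ) (i j : ℕ), t' ≤ t → π[i]? = some (validate lab t) →
      π[j]? = some (validate lab t') → j ≤ i := by
    intro t t' i j htt hi hj
    by_contra! hlt
    have h1 : CFluent.test t ∈ CondExec (compiledInit lab) (π.take (i + 1)) := by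
      rw [condExec_take_succ _ hi]
      exact test_mem_validate_succ lab _ t
    have h2 := test_mem_condExec_take_mono lab hacts _ t hlt h1
    exact absurd (((hpre t' j hj).2.2 t).1 h2) htt.not_gt
  refine ⟨fun a ha s t ht => test_mem_succ lab ha ht,
    fun t i j hij h => test_mem_condExec_take_mono lab hacts _ t hij h, ?_, ?_,
    fun t i hi => (hpre t i hi).1⟩
  · intro t
    have h0 : CFluent.test t ∉ (compiledInit lab : Set (CFluent P O X arP arX τ)) := by
      simp [compiledInit]
    obtain ⟨i, hi⟩ := exists_validate_of_test_mem_condExec lab hacts h0 (hgoal ⟨t, rfl⟩)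
    exact ⟨i, hi, fun j hj =>
      le_antisymm (hnot_lt t t i j le_rfl hi hj) (hnot_lt t t j i le_rfl hj hi)⟩
  · intro t t' htt i j hi hj
    refine lt_of_le_of_ne (hnot_lt t' t j i htt.le hj hi) ?_
    -- At a common position the two preconditions disagree on `test_t`.
    rintro rfl
    exact lt_irrefl t (((hpre t i hi).2.2 t).1 (((hpre t' i hj).2.2 t).2 htt))

end PlanLearn
end
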